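/- Let q be a prime power, let k, t, n, m be positive integers with k ≤ n, t | n, 1 ≤ t ≤ n−1, and n | m, and let σ : x ↦ x^{q^s} with gcd(s,m)=1. Let β ∈ F_{q^m}^*, let α_1,…,α_n be an F_q-basis of βF_{q^n}, and let G = { (g(α_1),…,g(α_n)) : g(x) = Σ_{i=0}^{k−1} a_i x^{σ^i}, a_i ∈ F_{q^m} } ⊆ F_{q^m}^n be the evaluation of the generalized Gabidulin code; its minimum rank distance is d = n−k+1. If ⌊(d−1)/2⌋ + 1 ≤ t ≤ d−1, then there exists a word w ∈ F_{q^m}^n ∖ G such that |G ∩ B_t(w)| ≥ (q^n−1)/(q^t−1). -/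

import Mathlib

/-- Rank weight of a vector `v ∈ K^n` over `F_q`. -/
noncomputable def rkw (Fq : Type) [Field Fq] {K : Type} [Field K] [Algebra Fq K] {n : ℕ}
    (v : Fin n → K) : ℕ :=
  Module.finrank Fq ↥(Submodule.span Fq (Set.range v))

/-- Ball of radius `t` around `w` in the rank metric. -/
def ball (Fq : Type) [Field Fq] {K : Type} [Field K] [Algebra Fq K] {n : ℕ}
    (w : Fin n → K) (t : ℕ) : Set (Fin n → K) :=
  {c : Fin n → K | rkw Fq (w - c) ≤ t}

/-- Minimum rank distance of a code `C ⊆ K^n`. -/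
noncomputable def minDist (Fq : Type) [Field Fq] {K : Type} [Field K] [Algebra Fq K] {n : ℕ}
    (C : Set (Fin n → K)) : ℕ :=
  sInf {r : ℕ | ∃ u ∈ C, ∃ v ∈ C, u ≠ v ∧ rkw Fq (u - v) = r}

/-!
Let `σ` be an `F`-endomorphism of `K` with fixed field `F`. A `σ`-linearized polynomial vanishing at
`v ≠ 0` is divisible on the right by `σ - id` composed with `x ↦ x / v`, so by induction a nonzero
one of `σ`-degree less than `k` has kernel of dimension less than `k`. Hence its values at `n`
independent points have rank greater than `n - k`, and with the Singleton bound the minimum distance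
is `n - k + 1`.

For the list, take `w = (σ^{n-t}(α_1), …, σ^{n-t}(α_n))`. For `0 ≠ γ ∈ F_{q^n}` the polynomial
`Tr(γ x / β)`, where `Tr = ∑_{i < n/t} σ^{ti}` is the trace from `F_{q^n}` to `F_{q^t}`, takes
values in `F_{q^t}` on `β F_{q^n}`, so evaluating it there gives rank at most `t`. After division by
its leading coefficient it is `x^{σ^{n-t}}` plus terms of `σ`-degree at most `n - 2t < k`, and those
terms are, up to sign, a codeword within distance `t` of `w`. The next coefficient determines `γ` up
to a factor in `F_{q^t}^*`, which leaves at least `(q^n - 1) / (q^t - 1)` distinct codewords.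
-/

section FixedSubalgebra

variable {F K : Type*} [Field F] [Field K] [Algebra F K]

/-- The subalgebra of elements fixed by an `F`-endomorphism `σ`. For
`σ = (x ↦ x^{q^s})` on `F_{q^m}`, the condition `gcd(s, m) = 1` amounts to
`fixedSubalgebra σ = ⊥`. -/
def fixedSubalgebra (σ : K →ₐ[F] K) : Subalgebra F K :=
  σ.equalizer (AlgHom.id F K)

theorem mem_fixedSubalgebra {σ : K →ₐ[F] K} {x : K} : x ∈ fixedSubalgebra σ ↔ σ x = x :=
  Iff.rfl

theorem fixedSubalgebra_le_pow (σ : K →ₐ[F] K) (i : ℕ) :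
    fixedSubalgebra σ ≤ fixedSubalgebra (σ ^ i) := fun x hx => by
  rw [mem_fixedSubalgebra, AlgHom.coe_pow]
  exact Function.iterate_fixed (mem_fixedSubalgebra.1 hx) i

theorem fixedSubalgebra_pow_of_coprime_orderOf {σ : K →ₐ[F] K} {s : ℕ}
    (hs : s.Coprime (orderOf σ)) : fixedSubalgebra (σ ^ s) = fixedSubalgebra σ := by
  obtain ⟨i, hi⟩ := exists_pow_eq_self_of_coprime hs
  exact le_antisymm ((fixedSubalgebra_le_pow (σ ^ s) i).trans_eq (by rw [hi]))
    (fixedSubalgebra_le_pow σ s)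

theorem sum_pow_apply_mem_fixedSubalgebra {τ : K →ₐ[F] K} {r : ℕ} {z : K}
    (hz : z ∈ fixedSubalgebra (τ ^ r)) :
    ∑ i ∈ Finset.range r, (τ ^ i) z ∈ fixedSubalgebra τ := by
  have hshift := Finset.sum_range_succ (fun i => (τ ^ i) z) r
  rw [Finset.sum_range_succ', mem_fixedSubalgebra.1 hz, pow_zero, AlgHom.one_apply] at hshift
  rw [mem_fixedSubalgebra, map_sum, ← add_right_cancel hshift]
  exact Finset.sum_congr rfl fun i _ => by rw [pow_succ', AlgHom.mul_apply]

end FixedSubalgebra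

section Moore

variable {F K : Type*} [Field F] [Field K] [Algebra F K] {σ : K →ₐ[F] K} {n : ℕ}

theorem linearIndependent_apply_div_sub_div (hσ : fixedSubalgebra σ = ⊥) {v : Fin (n + 1) → K}
    (hv : LinearIndependent F v) :
    LinearIndependent F fun j : Fin n => σ (v j.succ / v 0) - v j.succ / v 0 := by
  obtain ⟨htail, hhead⟩ := linearIndependent_finSucc.1 hv
  have hv₀ : v 0 ≠ 0 := hv.ne_zero 0
  let D : K →ₗ[F] K := (σ.toLinearMap - LinearMap.id) ∘ₗ LinearMap.mulRight F (v 0)⁻¹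
  have hker : LinearMap.ker D ≤ F ∙ v 0 := fun x hx => by
    have hfixed : σ (x / v 0) = x / v 0 := by
      simpa [D, sub_eq_zero, div_eq_mul_inv] using hx
    obtain ⟨c, hc⟩ := Algebra.mem_bot.1 (hσ ▸ mem_fixedSubalgebra.2 hfixed)
    exact Submodule.mem_span_singleton.2 ⟨c, by rw [Algebra.smul_def, hc, div_mul_cancel₀ _ hv₀]⟩
  simpa [D, Function.comp_def, Fin.tail, div_eq_mul_inv] using
    htail.map (f := D) (((Submodule.disjoint_span_singleton' hv₀).2 hhead).mono_right hker)

theorem coeff_eq_zero_of_sum_mul_pow_apply_eq_zero (hσ : fixedSubalgebra σ = ⊥) {v : Fin n → K}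
    (hv : LinearIndependent F v) {a : ℕ → K}
    (h : ∀ j, ∑ i ∈ Finset.range n, a i * (σ ^ i) (v j) = 0) {i : ℕ} (hi : i < n) : a i = 0 := by
  induction n generalizing a i with
  | zero => omega
  | succ n ih =>
    have hv₀ : v 0 ≠ 0 := hv.ne_zero 0
    let b (l : ℕ) : K := a l * (σ ^ l) (v 0)
    let B (l : ℕ) : K := ∑ m ∈ Finset.range l, b m
    have hBtop : B (n + 1) = 0 := h 0
    -- Summation by parts is right division by `σ - id`.
    have hparts (x : K) : ∑ l ∈ Finset.range (n + 1), b l * (σ ^ l) x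
        = -∑ l ∈ Finset.range n, B (l + 1) * (σ ^ l) (σ x - x) := by
      simpa [mul_comm, hBtop, B, pow_succ] using
        Finset.sum_range_by_parts (fun l => (σ ^ l) x) b (n + 1)
    have hB : ∀ l ≤ n + 1, B l = 0
      | 0, _ => rfl
      | l + 1, hl => by
        rcases (Nat.succ_le_succ_iff.1 hl).eq_or_lt with rfl | hlt
        · exact hBtop
        refine ih (linearIndependent_apply_div_sub_div hσ hv) (a := fun m => B (m + 1))
          (fun j => ?_) hlt
        rw [← neg_eq_zero, ← hparts, ← h j.succ]
        refine Finset.sum_congr rfl fun m _ => ?_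
        rw [mul_assoc, ← map_mul, mul_div_cancel₀ _ hv₀]
    have hbi : b i = 0 := by
      rw [← Finset.sum_range_succ_sub_sum b]
      exact (congrArg₂ (· - ·) (hB (i + 1) hi) (hB i hi.le)).trans (sub_zero 0)
    exact (mul_eq_zero.1 hbi).resolve_right ((map_ne_zero _).2 hv₀)

/-- Row `i` of the Moore matrix of `α`, that is `(σ^i(α_1), …, σ^i(α_n))`. -/
def mooreRow (σ : K →ₐ[F] K) (α : Fin n → K) (i : ℕ) : Fin n → K :=
  fun j => (σ ^ i) (α j)

theorem linearIndepOn_mooreRow (hσ : fixedSubalgebra σ = ⊥) {α : Fin n → K}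
    (hα : LinearIndependent F α) : LinearIndepOn K (mooreRow σ α) (Set.Iio n) := by
  rw [← Finset.coe_range, linearIndepOn_finset_iff]
  intro a ha i hi
  refine coeff_eq_zero_of_sum_mul_pow_apply_eq_zero hσ hα (fun j => ?_) (Finset.mem_range.1 hi)
  simpa [mooreRow] using congrFun ha j

/-- The linearized polynomial `∑_{i<k} a_i x^{σ^i}` as an `F`-linear map. -/
def linearizedPoly (σ : K →ₐ[F] K) (k : ℕ) (a : ℕ → K) : K →ₗ[F] K :=
  ∑ i ∈ Finset.range k, a i • (σ ^ i).toLinearMap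

theorem linearizedPoly_apply (σ : K →ₐ[F] K) (k : ℕ) (a : ℕ → K) (x : K) :
    linearizedPoly σ k a x = ∑ i ∈ Finset.range k, a i * (σ ^ i) x := by
  simp [linearizedPoly]

theorem rank_ker_linearizedPoly_lt (hσ : fixedSubalgebra σ = ⊥) {k i : ℕ} {a : ℕ → K}
    (hi : i < k) (ha : a i ≠ 0) : Module.rank F (LinearMap.ker (linearizedPoly σ k a)) < k := by
  by_contra! hle
  obtain ⟨u, hu⟩ := exists_linearIndependent_of_le_rank hle
  have hv : LinearIndependent F fun j => (u j : K) := hu.map' (Submodule.subtype _) (by simp)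
  refine ha (coeff_eq_zero_of_sum_mul_pow_apply_eq_zero hσ hv (fun j => ?_) hi)
  rw [← linearizedPoly_apply]
  exact (u j).2

theorem rank_fixedSubalgebra_pow_lt (hσ : fixedSubalgebra σ = ⊥) {t : ℕ} (ht : t ≠ 0) :
    Module.rank F (fixedSubalgebra (σ ^ t)) < (t + 1 : ℕ) := by
  let a : ℕ → K := Pi.single t 1 - Pi.single 0 1
  have ha : a t ≠ 0 := by simp [a, ht]
  have hle : (fixedSubalgebra (σ ^ t)).toSubmodule ≤ LinearMap.ker (linearizedPoly σ (t + 1) a) :=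
    fun x hx => by
      have hx' : (σ ^ t) x = x := hx
      simp [linearizedPoly_apply, a, sub_mul, Pi.single_apply, -AlgHom.coe_pow, hx']
  exact (Submodule.rank_mono hle).trans_lt (rank_ker_linearizedPoly_lt hσ t.lt_succ_self ha)

theorem finite_fixedSubalgebra_pow (hσ : fixedSubalgebra σ = ⊥) {t : ℕ} (ht : t ≠ 0) :
    Module.Finite F (fixedSubalgebra (σ ^ t)) :=
  Module.rank_lt_aleph0_iff.1
    ((rank_fixedSubalgebra_pow_lt hσ ht).trans Cardinal.natCast_lt_aleph0)

theorem finrank_fixedSubalgebra_pow_le (hσ : fixedSubalgebra σ = ⊥) {t : ℕ} (ht : t ≠ 0) :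
    Module.finrank F (fixedSubalgebra (σ ^ t)) ≤ t :=
  Nat.lt_succ_iff.1 (Module.finrank_lt_of_rank_lt (rank_fixedSubalgebra_pow_lt hσ ht))

end Moore

section Gabidulin

variable {F K : Type*} [Field F] [Field K] [Algebra F K] {σ : K →ₐ[F] K} {k n : ℕ} {α : Fin n → K}

/-- The evaluation at `α` of the generalized Gabidulin code `𝒢_{m,k,σ}`, presented by its generator
matrix, the first `k` rows of the Moore matrix of `α`. -/
def gabidulinCode (σ : K →ₐ[F] K) (k : ℕ) (α : Fin n → K) : Submodule K (Fin n → K) :=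
  Submodule.span K (mooreRow σ α '' Set.Iio k)

theorem mooreRow_mem_gabidulinCode {i : ℕ} (hi : i < k) :
    mooreRow σ α i ∈ gabidulinCode σ k α :=
  Submodule.subset_span (Set.mem_image_of_mem _ hi)

theorem mem_gabidulinCode {c : Fin n → K} :
    c ∈ gabidulinCode σ k α ↔ ∃ a : ℕ → K, linearizedPoly σ k a ∘ α = c := by
  rw [gabidulinCode, ← Finset.coe_range, Submodule.mem_span_image_finset_iff_exists_fun']
  refine exists_congr fun a => Eq.congr_left (funext fun j => ?_)
  simp [linearizedPoly_apply, mooreRow]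

theorem mooreRow_notMem_gabidulinCode (hσ : fixedSubalgebra σ = ⊥) (hα : LinearIndependent F α)
    {i : ℕ} (hki : k ≤ i) (hin : i < n) : mooreRow σ α i ∉ gabidulinCode σ k α := by
  have hrows := (linearIndepOn_mooreRow hσ hα).mono (Set.insert_subset (Set.mem_Iio.2 hin)
    (Set.Iio_subset_Iio (hki.trans hin.le)))
  exact (hrows.mono (Set.subset_insert _ _)).notMem_span_iff.2 ⟨hrows, hki.not_gt⟩

theorem finrank_gabidulinCode (hσ : fixedSubalgebra σ = ⊥) (hα : LinearIndependent F α)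
    (hkn : k ≤ n) : Module.finrank K (gabidulinCode σ k α) = k := by
  rw [gabidulinCode, Set.image_eq_range,
    finrank_span_eq_card ((linearIndepOn_mooreRow hσ hα).mono (Set.Iio_subset_Iio hkn))]
  simp

end Gabidulin

theorem finrank_le_finrank_map_add_finrank_ker {F M N : Type*} [Field F] [AddCommGroup M]
    [Module F M] [AddCommGroup N] [Module F N] (V : Submodule F M) [Module.Finite F V]
    (f : M →ₗ[F] N) [Module.Finite F (LinearMap.ker f)] :
    Module.finrank F V
      ≤ Module.finrank F (V.map f) + Module.finrank F (LinearMap.ker f) := by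
  have hker : Module.finrank F (LinearMap.ker (f.domRestrict V))
      ≤ Module.finrank F (LinearMap.ker f) := by
    rw [← Submodule.finrank_map_subtype_eq, LinearMap.ker_domRestrict]
    exact Submodule.finrank_mono (Submodule.map_comap_le _ _)
  have := LinearMap.finrank_range_add_finrank_ker (f.domRestrict V)
  rw [LinearMap.range_domRestrict] at this
  omega

section RankMetric

variable {F K : Type} [Field F] [Field K] [Algebra F K] {n : ℕ}

theorem rkw_le_finrank {W : Submodule F K} [Module.Finite F W] {v : Fin n → K}
    (hv : ∀ j, v j ∈ W) : rkw F v ≤ Module.finrank F W :=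
  Submodule.finrank_mono (Submodule.span_le.2 (Set.range_subset_iff.2 hv))

theorem rkw_le_of_castAdd_eq_zero {r s : ℕ} {v : Fin (r + s) → K}
    (hv : ∀ j, v (Fin.castAdd s j) = 0) : rkw F v ≤ s := by
  have hrange : Set.range v ⊆ insert 0 (Set.range (v ∘ Fin.natAdd r)) := by
    rintro _ ⟨j, rfl⟩
    exact Fin.addCases (fun i => Or.inl (hv i)) (fun i => Or.inr ⟨i, rfl⟩) j
  calc rkw F v
      ≤ Module.finrank F (Submodule.span F (insert 0 (Set.range (v ∘ Fin.natAdd r)))) :=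
        have := FiniteDimensional.span_of_finite F
          ((Set.finite_range (v ∘ Fin.natAdd r)).insert 0)
        Submodule.finrank_mono (Submodule.span_mono hrange)
    _ ≤ s := by
      rw [Submodule.span_insert_zero]
      exact (finrank_range_le_card _).trans_eq (Fintype.card_fin s)

/-- The Singleton bound for the rank metric. -/
theorem exists_ne_zero_rkw_le_of_lt_finrank {r s : ℕ} {C : Submodule K (Fin (r + s) → K)}
    (hC : r < Module.finrank K C) : ∃ c ∈ C, c ≠ 0 ∧ rkw F c ≤ s := by
  let π : C →ₗ[K] Fin r → K := LinearMap.funLeft K K (Fin.castAdd s) ∘ₗ C.subtype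
  obtain ⟨c, hc, hc₀⟩ := (Submodule.ne_bot_iff _).1
    (LinearMap.ker_ne_bot_of_finrank_lt (f := π) (by simpa using hC))
  exact ⟨c, c.2, by simpa using hc₀, rkw_le_of_castAdd_eq_zero (congrFun hc)⟩

theorem minDist_eq_of_forall_le_rkw {C : Submodule K (Fin n → K)} {d : ℕ}
    (hle : ∀ c ∈ C, c ≠ 0 → d ≤ rkw F c) (hex : ∃ c ∈ C, c ≠ 0 ∧ rkw F c ≤ d) :
    minDist F (C : Set (Fin n → K)) = d := by
  obtain ⟨c, hc, hc₀, hcd⟩ := hex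
  refine IsLeast.csInf_eq ⟨⟨c, hc, 0, C.zero_mem, hc₀, ?_⟩, ?_⟩
  · rw [sub_zero]
    exact hcd.antisymm (hle c hc hc₀)
  · rintro _ ⟨u, hu, v, hv, huv, rfl⟩
    exact hle _ (C.sub_mem hu hv) (sub_ne_zero.2 huv)

variable {σ : K →ₐ[F] K} {k : ℕ} {α : Fin n → K}

theorem lt_rkw_add_of_mem_gabidulinCode (hσ : fixedSubalgebra σ = ⊥) (hα : LinearIndependent F α)
    {c : Fin n → K} (hc : c ∈ gabidulinCode σ k α) (hc₀ : c ≠ 0) : n < rkw F c + k := by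
  obtain ⟨a, rfl⟩ := mem_gabidulinCode.1 hc
  obtain ⟨i, hi, ha⟩ : ∃ i < k, a i ≠ 0 := by
    by_contra! h
    refine hc₀ (funext fun j => ?_)
    simp only [Function.comp_apply, linearizedPoly_apply, Pi.zero_apply]
    exact Finset.sum_eq_zero fun i hi => by rw [h i (Finset.mem_range.1 hi), zero_mul]
  have hker := rank_ker_linearizedPoly_lt hσ hi ha
  have hker_finite := Module.rank_lt_aleph0_iff.1 (hker.trans Cardinal.natCast_lt_aleph0)
  have hspan_finite := FiniteDimensional.span_of_finite F (Set.finite_range α)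
  have hnullity := finrank_le_finrank_map_add_finrank_ker (Submodule.span F (Set.range α))
    (linearizedPoly σ k a)
  rw [finrank_span_eq_card hα, Fintype.card_fin, Submodule.map_span, ← Set.range_comp] at hnullity
  exact hnullity.trans_lt (Nat.add_lt_add_left (Module.finrank_lt_of_rank_lt hker) _)

theorem minDist_gabidulinCode (hσ : fixedSubalgebra σ = ⊥) (hα : LinearIndependent F α)
    (hk : k ≠ 0) (hkn : k ≤ n) :
    minDist F (gabidulinCode σ k α : Set (Fin n → K)) = n - k + 1 := by
  obtain ⟨r, rfl⟩ := Nat.exists_eq_add_one_of_ne_zero hk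
  obtain ⟨s, rfl⟩ : ∃ s, n = r + (s + 1) := ⟨n - (r + 1), by omega⟩
  rw [show r + (s + 1) - (r + 1) + 1 = s + 1 by omega]
  refine minDist_eq_of_forall_le_rkw (fun c hc hc₀ => ?_)
    (exists_ne_zero_rkw_le_of_lt_finrank ((finrank_gabidulinCode hσ hα hkn).symm ▸ r.lt_succ_self))
  have := lt_rkw_add_of_mem_gabidulinCode hσ hα hc hc₀
  omega

end RankMetric

section TraceCodeword

variable {F K : Type*} [Field F] [Field K] [Algebra F K] {σ : K →ₐ[F] K} {k n r t : ℕ}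
  {α : Fin n → K} {γ δ : K}

/-- The word evaluating, up to sign, the terms below the leading one of the polynomial
`x ↦ ∑_{i ≤ r} σ^{ti}(γ x)` divided by its leading coefficient `σ^{tr}(γ)`. For `γ ∈ F_{q^n}` with
`n = t(r + 1)` that polynomial is the trace of `F_{q^n}` over `F_{q^t}` composed with multiplication
by `γ`. -/
def traceCodeword (σ : K →ₐ[F] K) (α : Fin n → K) (t r : ℕ) (γ : K) : Fin n → K :=
  -∑ i ∈ Finset.range r, ((σ ^ (t * i)) γ / (σ ^ (t * r)) γ) • mooreRow σ α (t * i)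

theorem traceCodeword_mem_gabidulinCode (h : t * r < k + t) :
    traceCodeword σ α t r γ ∈ gabidulinCode σ k α := by
  refine neg_mem (Submodule.sum_smul_mem _ _ fun i hi => mooreRow_mem_gabidulinCode ?_)
  have : t * (i + 1) ≤ t * r := Nat.mul_le_mul_left t (Finset.mem_range.1 hi)
  rw [mul_add_one] at this
  omega

theorem mooreRow_sub_traceCodeword (hγ : γ ≠ 0) (j : Fin n) :
    (mooreRow σ α (t * r) - traceCodeword σ α t r γ) j
      = ((σ ^ (t * r)) γ)⁻¹ * ∑ i ∈ Finset.range (r + 1), ((σ ^ t) ^ i) (γ * α j) := by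
  have hlead : (σ ^ (t * r)) γ ≠ 0 := (map_ne_zero _).2 hγ
  simp only [traceCodeword, mooreRow, Pi.sub_apply, Pi.neg_apply, Finset.sum_apply, Pi.smul_apply,
    smul_eq_mul, sub_neg_eq_add, ← pow_mul, map_mul, Finset.sum_range_succ, mul_add,
    inv_mul_cancel_left₀ hlead, Finset.mul_sum]
  rw [add_comm]
  exact congrArg (· + _) (Finset.sum_congr rfl fun i _ => by ring)

theorem div_mem_fixedSubalgebra_of_traceCodeword_eq (hσ : fixedSubalgebra σ = ⊥)
    (hα : LinearIndependent F α) (ht : t ≠ 0) (hr : r ≠ 0) (hrn : t * r < n) (hγ : γ ≠ 0)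
    (hδ : δ ≠ 0) (h : traceCodeword σ α t r γ = traceCodeword σ α t r δ) :
    γ / δ ∈ fixedSubalgebra (σ ^ t) := by
  obtain ⟨s, rfl⟩ := Nat.exists_eq_add_one_of_ne_zero hr
  have hlt : (t * ·) '' (Finset.range (s + 1) : Set ℕ) ⊆ Set.Iio n := by
    rintro _ ⟨i, hi, rfl⟩
    exact (Nat.mul_le_mul_left t (Finset.mem_range.1 hi).le).trans_lt hrn
  have hrows : LinearIndepOn K (fun i => mooreRow σ α (t * i)) (Finset.range (s + 1)) :=
    LinearIndepOn.comp_of_image (f := (t * ·)) ((linearIndepOn_mooreRow hσ hα).mono hlt)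
      (mul_right_injective₀ ht).injOn
  have hcoeff : (σ ^ (t * s)) γ / (σ ^ (t * (s + 1))) γ = (σ ^ (t * s)) δ / (σ ^ (t * (s + 1))) δ :=
    linearIndepOn_finset_iffₛ.1 hrows _ _ (neg_injective h) s (Finset.self_mem_range_succ s)
  rw [div_eq_div_iff_div_eq_div' ((map_ne_zero _).2 hγ) ((map_ne_zero _).2 hδ), mul_add_one,
    pow_add, AlgHom.mul_apply, AlgHom.mul_apply, ← map_div₀, ← map_div₀, ← map_div₀] at hcoeff
  exact ((σ ^ (t * s)).injective hcoeff).symm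

end TraceCodeword

section Counting

variable {F K : Type*} [Field F] [Field K] [Algebra F K]

theorem ncard_sdiff_singleton_zero (V : Submodule F K) [Module.Finite F V] :
    ((V : Set K) \ {0}).ncard = Nat.card F ^ Module.finrank F V - 1 := by
  rw [Set.ncard_sdiff_singleton_of_mem V.zero_mem, ← Module.natCard_eq_pow_finrank]
  rfl

theorem div_le_ncard_image_of_div_mem [Finite F] {V E : Submodule F K} [Module.Finite F V]
    [Module.Finite F E] {t : ℕ} (ht : Module.finrank F E ≤ t) {X : Type*} {f : K → X}
    (hf : ∀ γ ∈ V, ∀ δ ∈ V, γ ≠ 0 → δ ≠ 0 → f γ = f δ → γ / δ ∈ E) :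
    (Nat.card F ^ Module.finrank F V - 1) / (Nat.card F ^ t - 1)
      ≤ (f '' ((V : Set K) \ {0})).ncard := by
  classical
  have : Finite V := Module.finite_of_finite F
  have : Finite E := Module.finite_of_finite F
  have hV : ((V : Set K) \ {0}).Finite := (Set.toFinite (V : Set K)).sdiff
  have hE : ((E : Set K) \ {0}).Finite := (Set.toFinite (E : Set K)).sdiff
  have hfiber (x) (hx : x ∈ hV.toFinset.image f) :
      (hV.toFinset.filter (f · = x)).card ≤ Nat.card F ^ t - 1 := by
    obtain ⟨δ, hδ, rfl⟩ := Finset.mem_image.1 hx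
    obtain ⟨hδV, hδ₀ : δ ≠ 0⟩ := hV.mem_toFinset.1 hδ
    calc (hV.toFinset.filter (f · = f δ)).card
        ≤ hE.toFinset.card := by
          refine Finset.card_le_card_of_injOn (· / δ) (fun γ hγ => ?_)
            fun _ _ _ _ => (div_left_inj' hδ₀).1
          obtain ⟨hγ, hγδ⟩ := Finset.mem_filter.1 hγ
          obtain ⟨hγV, hγ₀ : γ ≠ 0⟩ := hV.mem_toFinset.1 hγ
          exact hE.mem_toFinset.2 ⟨hf γ hγV δ hδV hγ₀ hδ₀ hγδ, div_ne_zero hγ₀ hδ₀⟩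
      _ = Nat.card F ^ Module.finrank F E - 1 := by
          rw [← Set.ncard_eq_toFinset_card _ hE, ncard_sdiff_singleton_zero]
      _ ≤ Nat.card F ^ t - 1 :=
          Nat.sub_le_sub_right (Nat.pow_le_pow_right Nat.card_pos ht) 1
  refine Nat.div_le_of_le_mul ?_
  rw [← ncard_sdiff_singleton_zero, Set.ncard_eq_toFinset_card _ hV,
    Set.ncard_eq_toFinset_card _ (hV.image f), Set.Finite.toFinset_image]
  exact Finset.card_le_mul_card_image _ _ hfiber

end Counting

section ListSize

variable {F K : Type} [Field F] [Field K] [Algebra F K] {σ : K →ₐ[F] K} {k t : ℕ}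

theorem rkw_mooreRow_sub_traceCodeword_le (hσ : fixedSubalgebra σ = ⊥) {n r : ℕ}
    {α : Fin n → K} {γ : K} (ht : t ≠ 0) (hγ : γ ≠ 0)
    (hfix : ∀ j, γ * α j ∈ fixedSubalgebra (σ ^ (t * (r + 1)))) :
    rkw F (mooreRow σ α (t * r) - traceCodeword σ α t r γ) ≤ t := by
  have := finite_fixedSubalgebra_pow hσ ht
  let E := (fixedSubalgebra (σ ^ t)).toSubmodule
  let scale : K →ₗ[F] K := LinearMap.mulLeft F ((σ ^ (t * r)) γ)⁻¹
  have hmem (j) : (mooreRow σ α (t * r) - traceCodeword σ α t r γ) j ∈ E.map scale := by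
    rw [mooreRow_sub_traceCodeword hγ]
    exact Submodule.mem_map_of_mem
      (sum_pow_apply_mem_fixedSubalgebra ((pow_mul σ t (r + 1)).symm ▸ hfix j))
  calc rkw F (mooreRow σ α (t * r) - traceCodeword σ α t r γ)
      ≤ Module.finrank F (E.map scale) := rkw_le_finrank hmem
    _ ≤ Module.finrank F E := Submodule.finrank_map_le _ _
    _ ≤ t := finrank_fixedSubalgebra_pow_le hσ ht

variable [Finite F] {β : K}

theorem div_le_encard_gabidulinCode_inter_ball (hσ : fixedSubalgebra σ = ⊥) {r : ℕ} (ht : t ≠ 0)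
    (hr : r ≠ 0) (hrk : t * r < k + t) (hβ : β ≠ 0) {α : Fin (t * (r + 1)) → K}
    (hα : LinearIndependent F α)
    (hfix : ∀ j, α j / β ∈ fixedSubalgebra (σ ^ (t * (r + 1)))) :
    (((Nat.card F ^ (t * (r + 1)) - 1) / (Nat.card F ^ t - 1) : ℕ) : ℕ∞)
      ≤ ((gabidulinCode σ k α : Set (Fin (t * (r + 1)) → K))
          ∩ ball F (mooreRow σ α (t * r)) t).encard := by
  let V := Submodule.span F (Set.range fun j => α j / β)
  have hVfin : Module.Finite F V := FiniteDimensional.span_of_finite F (Set.finite_range _)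
  have hVfix : V ≤ (fixedSubalgebra (σ ^ (t * (r + 1)))).toSubmodule :=
    Submodule.span_le.2 (Set.range_subset_iff.2 hfix)
  have hVdim : Module.finrank F V = t * (r + 1) := by
    have hindep : LinearIndependent F fun j => α j / β := by
      simp only [div_eq_mul_inv]
      exact hα.map' (LinearMap.mulRight F β⁻¹)
        (LinearMap.ker_eq_bot.2 (mul_left_injective₀ (inv_ne_zero hβ)))
    exact (finrank_span_eq_card hindep).trans (Fintype.card_fin _)
  have hEfin := finite_fixedSubalgebra_pow hσ ht
  have hcount := div_le_ncard_image_of_div_mem (V := V)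
    (E := (fixedSubalgebra (σ ^ t)).toSubmodule) (finrank_fixedSubalgebra_pow_le hσ ht)
    (f := fun γ => traceCodeword σ α t r (γ / β))
    fun γ _ δ _ hγ hδ h => by
      have := div_mem_fixedSubalgebra_of_traceCodeword_eq hσ hα ht hr (by gcongr; omega)
        (div_ne_zero hγ hβ) (div_ne_zero hδ hβ) h
      rwa [div_div_div_cancel_right₀ hβ] at this
  rw [hVdim] at hcount
  refine (Nat.cast_le.2 hcount).trans ((Set.ncard_le_encard _).trans (Set.encard_le_encard ?_))
  rintro _ ⟨γ, ⟨hγ, hγ₀⟩, rfl⟩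
  refine ⟨traceCodeword_mem_gabidulinCode hrk,
    rkw_mooreRow_sub_traceCodeword_le hσ ht (div_ne_zero hγ₀ hβ) fun j => ?_⟩
  rw [div_mul_comm]
  exact mul_mem (hfix j) (hVfix hγ)

/-- `K` may be infinite, hence `encard` rather than `ncard`, which is `0` on infinite sets. -/
theorem stmt_18_general {n : ℕ} (hσ : fixedSubalgebra σ = ⊥) (hk : k ≠ 0) (htn : t ∣ n)
    (hlow : (n - k) / 2 < t) (hup : t ≤ n - k) (hβ : β ≠ 0) {α : Fin n → K}
    (hα : LinearIndependent F α) (hfix : ∀ j, α j / β ∈ fixedSubalgebra (σ ^ n)) :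
    minDist F (gabidulinCode σ k α : Set (Fin n → K)) = n - k + 1 ∧
    ∃ w, w ∉ gabidulinCode σ k α ∧
      (((Nat.card F ^ n - 1) / (Nat.card F ^ t - 1) : ℕ) : ℕ∞)
        ≤ ((gabidulinCode σ k α : Set (Fin n → K)) ∩ ball F w t).encard := by
  refine ⟨minDist_gabidulinCode hσ hα hk (by omega), ?_⟩
  obtain ⟨c, rfl⟩ := htn
  obtain ⟨r, rfl⟩ : ∃ r, c = r + 1 := Nat.exists_eq_add_one_of_ne_zero (by rintro rfl; omega)
  have hr : r ≠ 0 := by rintro rfl; omega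
  have hn := mul_add_one t r
  exact ⟨mooreRow σ α (t * r), mooreRow_notMem_gabidulinCode hσ hα (by omega) (by omega),
    div_le_encard_gabidulinCode_inter_ball hσ (by omega) hr (by omega) hβ hα hfix⟩

end ListSize

section Frobenius

open FiniteField Polynomial

variable {F K : Type*} [Field F] [Fintype F] [Field K] [Algebra F K]

theorem frobeniusAlgHom_pow_apply (i : ℕ) (x : K) :
    (frobeniusAlgHom F K ^ i) x = x ^ Fintype.card F ^ i := by
  rw [AlgHom.coe_pow, coe_frobeniusAlgHom, pow_iterate]

theorem fixedSubalgebra_frobeniusAlgHom : fixedSubalgebra (frobeniusAlgHom F K) = ⊥ := by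
  have hsplits : (X ^ Fintype.card F - X : F[X]).Splits := by
    rw [splits_iff_card_roots, roots_X_pow_card_sub_X,
      X_pow_card_sub_X_natDegree_eq F Fintype.one_lt_card]
    rfl
  refine eq_bot_iff.2 fun x hx => Algebra.mem_bot.2 ?_
  have hx' : x ^ Fintype.card F = x := hx
  exact hsplits.mem_range_of_isRoot (X_pow_card_sub_X_ne_zero F Fintype.one_lt_card)
    (by simp [hx'])

theorem image_eval_eq_gabidulinCode (s k : ℕ) {n : ℕ} (α : Fin n → K) :
    (fun (g : K → K) i => g (α i)) '' {f : K → K | ∃ a : Fin k → K, ∀ x,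
        f x = ∑ i : Fin k, a i * x ^ (Fintype.card F ^ s) ^ (i : ℕ)}
      = gabidulinCode (frobeniusAlgHom F K ^ s) k α := by
  ext c
  rw [gabidulinCode, ← Fin.range_val, ← Set.range_comp, SetLike.mem_coe,
    Submodule.mem_span_range_iff_exists_fun]
  have hrow (a : Fin k → K) :
      ∑ i : Fin k, a i • (mooreRow (frobeniusAlgHom F K ^ s) α ∘ Fin.val) i = fun j =>
        ∑ i : Fin k, a i * α j ^ (Fintype.card F ^ s) ^ (i : ℕ) := by
    funext j
    simp only [Finset.sum_apply, Pi.smul_apply, smul_eq_mul, Function.comp_apply, mooreRow,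
      ← pow_mul, frobeniusAlgHom_pow_apply]
  simp only [hrow]
  constructor
  · rintro ⟨f, ⟨a, ha⟩, rfl⟩
    exact ⟨a, funext fun j => (ha _).symm⟩
  · rintro ⟨a, rfl⟩
    exact ⟨_, ⟨a, fun _ => rfl⟩, rfl⟩

end Frobenius

/-- the evaluation `G` of the generalized Gabidulin code `𝒢_{m,k,σ}` over an
`F_q`-basis of `βF_{q^n}` has minimum rank distance `d = n−k+1`, and for each `t ∣ n` with
`⌊(d−1)/2⌋+1 ≤ t ≤ d−1` there is a word `w ∉ G` with `|G ∩ B_t(w)| ≥ (q^n−1)/(q^t−1)`. -/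
theorem stmt_18 (q s k t n m : ℕ) (Fq K : Type) [Field Fq] [Fintype Fq] [Field K]
    [Fintype K] [Algebra Fq K]
    (hcard : Fintype.card Fq = q) (hfin : Module.finrank Fq K = m)
    (hn : 0 < n) (hnm : n ∣ m) (hs : Nat.gcd s m = 1)
    (hk : 0 < k) (hkn : k ≤ n)
    (ht0 : 0 < t) (htn : t ∣ n) (htn1 : t ≤ n - 1)
    (β : K) (hβ : β ≠ 0)
    (α : Fin n → K) (hα : LinearIndependent Fq α)
    (hspan : (Submodule.span Fq (Set.range α) : Set K)
      = (fun y : K => β * y) '' {x : K | x ^ q ^ n = x})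
    (G : Set (Fin n → K))
    (hG : G = (fun g : K → K => fun i : Fin n => g (α i)) ''
      {f : K → K | ∃ a : Fin k → K, ∀ x : K,
        f x = ∑ i : Fin k, a i * x ^ ((q ^ s) ^ (i : ℕ))})
    (d : ℕ) (hd : d = n - k + 1)
    (ht1 : (d - 1) / 2 + 1 ≤ t) (ht2 : (t : ℤ) ≤ (d : ℤ) - 1) :
    minDist Fq G = n - k + 1 ∧
    ∃ w : Fin n → K, w ∉ G ∧
      (q ^ n - 1) / (q ^ t - 1) ≤ Nat.card ↥(G ∩ ball Fq w t) := by
  subst hcard hfin hG hd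
  let φ := FiniteField.frobeniusAlgHom Fq K
  rw [image_eval_eq_gabidulinCode]
  have hσ : fixedSubalgebra (φ ^ s) = ⊥ := by
    rw [fixedSubalgebra_pow_of_coprime_orderOf, fixedSubalgebra_frobeniusAlgHom]
    rwa [FiniteField.orderOf_frobeniusAlgHom]
  have hfix (j) : α j / β ∈ fixedSubalgebra ((φ ^ s) ^ n) := by
    obtain ⟨y, hy : y ^ Fintype.card Fq ^ n = y, hyj : β * y = α j⟩ :=
      hspan.subset (Submodule.subset_span ⟨j, rfl⟩)
    rw [← hyj, mul_div_cancel_left₀ y hβ, pow_right_comm]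
    exact fixedSubalgebra_le_pow _ s ((frobeniusAlgHom_pow_apply n y).trans hy)
  obtain ⟨hdist, w, hw, hlist⟩ :=
    stmt_18_general hσ hk.ne' htn (by omega) (by omega) hβ hα hfix
  refine ⟨hdist, w, hw, ?_⟩
  rwa [← (Set.toFinite _).cast_ncard_eq, Nat.cast_le, Nat.card_eq_fintype_card] at hlist
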